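/- Let I be a real interval, n ≥ 1, and c₁,…,cₙ : I → ℂ continuous functions such that the monic polynomial p_t(λ) = λⁿ + c₁(t)λ^{n−1} + ⋯ + cₙ(t) has exactly r distinct roots for every t ∈ I. Then there are r continuous functions α₁,…,α_r : I → ℂ such that for every t ∈ I the values α₁(t),…,α_r(t) are the r distinct roots of p_t, and moreover the multiplicity of αᵢ(t) as a root of p_t is constant in t for each i. -/

import Mathlib

open Polynomial Set

section Aux
open Filter Topology

variable {T : Type*} [TopologicalSpace T]

lemma aux_eval_cont {n : ℕ} (p : T → ℂ[X]) (hd : ∀ t, (p t).natDegree = n)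
    (hc : ∀ k, Continuous fun t => (p t).coeff k) (z : ℂ) :
    Continuous fun t => (p t).eval z := by
  have : (fun t => (p t).eval z) =
      fun t => ∑ k ∈ Finset.range (n + 1), (p t).coeff k * z ^ k := by
    ext t
    rw [eval_eq_sum_range, hd]
  rw [this]
  exact continuous_finsetSum _ fun k _ => (hc k).mul continuous_const

lemma aux_bound {n : ℕ} (p : T → ℂ[X]) (hm : ∀ t, (p t).Monic)
    (hd : ∀ t, (p t).natDegree = n) (t : T) (z : ℂ) (hz : (p t).IsRoot z) :
    ‖z‖ ≤ (∑ k ∈ Finset.range n, ‖(p t).coeff k‖) + 1 := by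
  have h := (IsRoot.norm_lt_cauchyBound (hm t).ne_zero hz).le
  have h2 : cauchyBound (p t) ≤ (∑ k ∈ Finset.range n, ‖(p t).coeff k‖₊) + 1 := by
    unfold cauchyBound
    rw [(hm t).leadingCoeff, hd]
    simp only [nnnorm_one, div_one]
    gcongr
    apply Finset.sup_le
    intro k hk
    exact Finset.single_le_sum (f := fun k => ‖(p t).coeff k‖₊) (fun _ _ => by positivity) hk
  have h3 := h.trans h2
  rw [← NNReal.coe_le_coe] at h3
  simpa using h3

lemma aux_tuple (q : ℂ[X]) (n : ℕ) (hd : q.natDegree = n) :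
    ∃ x : Fin n → ℂ, q.roots = Multiset.map x Finset.univ.val := by
  have hcard : q.roots.card = n := by
    rw [← hd]; exact (splits_iff_card_roots.mp (IsAlgClosed.splits q))
  obtain ⟨l, hl⟩ := Quot.exists_rep q.roots
  have hl' : (l : Multiset ℂ) = q.roots := hl
  rw [← hl'] at hcard ⊢
  rw [Multiset.coe_card] at hcard
  subst hcard
  refine ⟨l.get, ?_⟩
  change (l : Multiset ℂ) = ((List.finRange l.length).map l.get : List ℂ)
  rw [List.map_get_finRange]

lemma aux_prod (q : ℂ[X]) (hm : q.Monic) {n : ℕ} (x : Fin n → ℂ)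
    (h : q.roots = Multiset.map x Finset.univ.val) :
    q = ∏ i, (X - C (x i)) := by
  have := (IsAlgClosed.splits q).eq_prod_roots_of_monic hm
  rw [h, Multiset.map_map] at this
  exact this

lemma aux_A {n : ℕ} (p : T → ℂ[X]) (hm : ∀ t, (p t).Monic)
    (hd : ∀ t, (p t).natDegree = n)
    (hc : ∀ k, Continuous fun t => (p t).coeff k) (t₀ : T) (ε : ℝ) (hε : 0 < ε) :
    ∀ᶠ t in 𝓝 t₀, ∃ x w : Fin n → ℂ, (p t).roots = Multiset.map x Finset.univ.val ∧
      (p t₀).roots = Multiset.map w Finset.univ.val ∧ ∀ i, dist (x i) (w i) < ε := by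
  by_contra hcon
  rw [not_eventually, frequently_iff_neBot] at hcon
  choose x hx using fun t => aux_tuple (p t) n (hd t)
  set G := Ultrafilter.of (𝓝 t₀ ⊓ 𝓟 {t | ¬ ∃ x w : Fin n → ℂ,
      (p t).roots = Multiset.map x Finset.univ.val ∧
      (p t₀).roots = Multiset.map w Finset.univ.val ∧ ∀ i, dist (x i) (w i) < ε})
  have hG := Ultrafilter.of_le (𝓝 t₀ ⊓ 𝓟 {t | ¬ ∃ x w : Fin n → ℂ,
      (p t).roots = Multiset.map x Finset.univ.val ∧
      (p t₀).roots = Multiset.map w Finset.univ.val ∧ ∀ i, dist (x i) (w i) < ε})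
  have hG1 : (G : Filter T) ≤ 𝓝 t₀ := hG.trans inf_le_left
  have hG2 := le_principal_iff.mp (hG.trans inf_le_right)
  have hbc : Continuous fun t => (∑ k ∈ Finset.range n, ‖(p t).coeff k‖) + 1 := by
    fun_prop
  set M := (∑ k ∈ Finset.range n, ‖(p t₀).coeff k‖) + 1 with hM
  have hM0 : 0 ≤ M := by positivity
  have hbd : ∀ᶠ t in (G : Filter T), x t ∈ Metric.closedBall (0 : Fin n → ℂ) (M + 1) := by
    have : ∀ᶠ t in 𝓝 t₀, (∑ k ∈ Finset.range n, ‖(p t).coeff k‖) + 1 < M + 1 :=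
      (hbc.tendsto t₀).eventually (gt_mem_nhds (by linarith))
    filter_upwards [hG1 this] with t ht
    rw [mem_closedBall_zero_iff, pi_norm_le_iff_of_nonneg (by positivity)]
    intro i
    have hr : (p t).IsRoot (x t i) := by
      apply isRoot_of_mem_roots
      rw [hx t]
      exact Multiset.mem_map_of_mem _ (Finset.mem_univ i)
    exact (aux_bound p hm hd t _ hr).trans ht.le
  obtain ⟨w, -, hw⟩ := (isCompact_closedBall (0 : Fin n → ℂ) (M + 1)).ultrafilter_le_nhds
    (G.map x) (le_principal_iff.mpr hbd)
  have hw' : Tendsto x G (𝓝 w) := hw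
  have hpw : p t₀ = ∏ i, (X - C (w i)) := by
    apply Polynomial.funext
    intro z
    have h1 : Tendsto (fun t => (p t).eval z) G (𝓝 ((p t₀).eval z)) :=
      ((aux_eval_cont p hd hc z).tendsto t₀).mono_left hG1
    have h2 : Tendsto (fun t => (p t).eval z) G (𝓝 (∏ i, (z - w i))) := by
      have : (fun t => (p t).eval z) = fun t => ∏ i, (z - x t i) := by
        ext t
        conv_lhs => rw [aux_prod (p t) (hm t) (x t) (hx t)]
        simp [eval_prod]
      rw [this]
      apply tendsto_finsetProd
      intro i _
      exact tendsto_const_nhds.sub ((tendsto_pi_nhds.mp hw') i)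
    rw [tendsto_nhds_unique h1 h2]
    simp [eval_prod]
  have hroots : (p t₀).roots = Multiset.map w Finset.univ.val := by
    rw [hpw]
    exact roots_multiset_prod_X_sub_C (Multiset.map w Finset.univ.val) ▸ by
      rw [Multiset.map_map]; rfl
  have hev : ∀ᶠ t in (G : Filter T), dist (x t) w < ε :=
    hw'.eventually (Metric.ball_mem_nhds w hε)
  obtain ⟨t, ht1, ht2⟩ := (hev.and hG2).exists
  exact ht2 ⟨x t, w, hx t, hroots, fun i => (dist_le_pi_dist _ _ i).trans_lt ht1⟩

lemma aux_comb {n : ℕ} (x w : Fin n → ℂ) (ε : ℝ) (h : ∀ i, dist (x i) (w i) < ε)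
    (hs : ∀ i j, dist (w i) (w j) < 2 * ε → w i = w j)
    (hcard : (Finset.univ.image x).card = (Finset.univ.image w).card) (i j : Fin n) :
    x i = x j ↔ w i = w j := by
  have h1 : ∀ i j, x i = x j → w i = w j := by
    intro i j hij
    apply hs
    have a := h i
    have b := h j
    rw [dist_comm] at a
    rw [hij] at a
    linarith [dist_triangle (w i) (x j) (w j)]
  refine ⟨h1 i j, ?_⟩
  intro hw
  let φ : ℂ → ℂ := fun y => if hy : ∃ k, x k = y then w hy.choose else 0
  have hφ : ∀ k, φ (x k) = w k := by
    intro k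
    have hy : ∃ k', x k' = x k := ⟨k, rfl⟩
    simp only [φ, dif_pos hy]
    exact h1 _ _ hy.choose_spec
  have him : (Finset.univ.image x).image φ = Finset.univ.image w := by
    rw [Finset.image_image]
    congr 1
    ext k
    exact hφ k
  have hinj := Finset.card_image_iff.mp (by rw [him]; exact hcard.symm)
  apply hinj (by simp) (by simp)
  rw [hφ, hφ, hw]

lemma aux_toFinset {n : ℕ} (s : Multiset ℂ) (x : Fin n → ℂ)
    (h : s = Multiset.map x Finset.univ.val) : s.toFinset = Finset.univ.image x := by
  rw [h]; rfl

lemma aux_B {n r : ℕ} (p : T → ℂ[X]) (hm : ∀ t, (p t).Monic)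
    (hd : ∀ t, (p t).natDegree = n)
    (hc : ∀ k, Continuous fun t => (p t).coeff k)
    (hr : ∀ t, (p t).roots.toFinset.card = r) (t₀ : T) :
    ∃ ε > 0, (∀ z z', (p t₀).IsRoot z → (p t₀).IsRoot z' → dist z z' < 2 * ε → z = z') ∧
      ∀ᶠ t in 𝓝 t₀, (∀ z, (p t₀).IsRoot z → ∃ z', (p t).IsRoot z' ∧ dist z' z < ε) ∧
        (∀ z', (p t).IsRoot z' → ∃ z, (p t₀).IsRoot z ∧ dist z' z < ε) ∧
        (∀ z z' z'', (p t₀).IsRoot z → (p t).IsRoot z' → (p t).IsRoot z'' →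
          dist z' z < ε → dist z'' z < ε → z' = z'') ∧
        (∀ z z', (p t₀).IsRoot z → (p t).IsRoot z' → dist z' z < ε →
          (p t).rootMultiplicity z' = (p t₀).rootMultiplicity z) := by
  obtain ⟨ε, hε, hsep⟩ : ∃ ε > 0, ∀ z z', (p t₀).IsRoot z → (p t₀).IsRoot z' →
      dist z z' < 2 * ε → z = z' := by
    have hfin : Set.Finite (((p t₀).roots.toFinset ×ˢ (p t₀).roots.toFinset : Finset (ℂ × ℂ)).filter
        (fun q => q.1 ≠ q.2) : Set (ℂ × ℂ)) := Finset.finite_toSet _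
    have hev : ∀ᶠ δ in 𝓝[>] (0 : ℝ), ∀ q ∈ ((((p t₀).roots.toFinset ×ˢ
        (p t₀).roots.toFinset : Finset (ℂ × ℂ)).filter
        (fun q => q.1 ≠ q.2) : Finset (ℂ × ℂ)) : Set (ℂ × ℂ)), 2 * δ < dist q.1 q.2 := by
      rw [eventually_all_finite hfin]
      intro q hq
      have hq2 : q.1 ≠ q.2 := (Finset.mem_filter.mp (Finset.mem_coe.mp hq)).2
      have hpos : 0 < dist q.1 q.2 := dist_pos.mpr hq2
      apply nhdsWithin_le_nhds
      filter_upwards [gt_mem_nhds (half_pos hpos)] with δ hδ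
      linarith
    obtain ⟨δ, h1, h2⟩ := (hev.and self_mem_nhdsWithin).exists
    refine ⟨δ, h2, fun z z' hz hz' hlt => ?_⟩
    by_contra hne
    have := h1 (z, z') (by
      simp only [Finset.coe_filter, Set.mem_ofPred_eq, Finset.mem_product, Multiset.mem_toFinset]
      exact ⟨⟨(mem_roots (hm t₀).ne_zero).mpr hz, (mem_roots (hm t₀).ne_zero).mpr hz'⟩, hne⟩)
    simp only at this
    linarith
  refine ⟨ε, hε, hsep, ?_⟩
  filter_upwards [aux_A p hm hd hc t₀ ε hε] with t ht
  obtain ⟨x, w, hx, hw, hdist⟩ := ht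
  have rx : ∀ z, (p t).IsRoot z ↔ ∃ i, x i = z := by
    intro z
    rw [← mem_roots (hm t).ne_zero, hx]
    simp
  have rw' : ∀ z, (p t₀).IsRoot z ↔ ∃ i, w i = z := by
    intro z
    rw [← mem_roots (hm t₀).ne_zero, hw]
    simp
  have hcomb := aux_comb x w ε hdist
    (fun i j h => hsep _ _ ((rw' _).mpr ⟨i, rfl⟩) ((rw' _).mpr ⟨j, rfl⟩) h)
    (by rw [← aux_toFinset _ x hx, ← aux_toFinset _ w hw, hr, hr])
  have key : ∀ i k, dist (x i) (w k) < ε → w i = w k := by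
    intro i k h
    apply hsep _ _ ((rw' _).mpr ⟨i, rfl⟩) ((rw' _).mpr ⟨k, rfl⟩)
    have := hdist i
    rw [dist_comm] at this
    linarith [dist_triangle (w i) (x i) (w k)]
  refine ⟨?_, ?_, ?_, ?_⟩
  · intro z hz
    obtain ⟨i, rfl⟩ := (rw' z).mp hz
    exact ⟨x i, (rx _).mpr ⟨i, rfl⟩, hdist i⟩
  · intro z hz
    obtain ⟨i, rfl⟩ := (rx z).mp hz
    exact ⟨w i, (rw' _).mpr ⟨i, rfl⟩, hdist i⟩
  · intro z z' z'' hz hz' hz'' h1 h2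
    obtain ⟨k, rfl⟩ := (rw' z).mp hz
    obtain ⟨i, rfl⟩ := (rx z').mp hz'
    obtain ⟨j, rfl⟩ := (rx z'').mp hz''
    rw [hcomb, key i k h1, key j k h2]
  · intro z z' hz hz' h1
    obtain ⟨k, rfl⟩ := (rw' z).mp hz
    obtain ⟨i, rfl⟩ := (rx z').mp hz'
    rw [← count_roots, ← count_roots, hx, hw, ← key i k h1, Multiset.count_map,
      Multiset.count_map]
    congr 1
    apply Multiset.filter_congr
    intro j _
    exact hcomb i j

lemma aux_open {n : ℕ} (p : T → ℂ[X]) (hm : ∀ t, (p t).Monic)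
    (hd : ∀ t, (p t).natDegree = n)
    (hc : ∀ k, Continuous fun t => (p t).coeff k) :
    IsOpenMap (fun e : {q : T × ℂ // (p q.1).IsRoot q.2} => e.1.1) := by
  rw [isOpenMap_iff_nhds_le]
  rintro ⟨⟨t₀, z₀⟩, h₀⟩ S hS
  rw [mem_map, nhds_subtype_eq_comap, mem_comap] at hS
  obtain ⟨N, hN, hNS⟩ := hS
  rw [nhds_prod_eq, mem_prod_iff] at hN
  obtain ⟨A, hA, B, hB, hAB⟩ := hN
  obtain ⟨ε, hε, hεB⟩ := Metric.mem_nhds_iff.mp hB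
  filter_upwards [hA, aux_A p hm hd hc t₀ ε hε] with t htA ht
  obtain ⟨x, w, hx, hw, hdist⟩ := ht
  have : z₀ ∈ (p t₀).roots := (mem_roots (hm t₀).ne_zero).mpr h₀
  rw [hw, Multiset.mem_map] at this
  obtain ⟨i, -, rfl⟩ := this
  have hr : (p t).IsRoot (x i) := by
    rw [← mem_roots (hm t).ne_zero, hx]
    simp
  exact @hNS ⟨(t, x i), hr⟩ (hAB ⟨htA, hεB (hdist i)⟩)

lemma aux_cov {n r : ℕ} (hn : 1 ≤ n) (p : T → ℂ[X]) (hm : ∀ t, (p t).Monic)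
    (hd : ∀ t, (p t).natDegree = n)
    (hc : ∀ k, Continuous fun t => (p t).coeff k)
    (hr : ∀ t, (p t).roots.toFinset.card = r) :
    IsCoveringMap (fun e : {q : T × ℂ // (p q.1).IsRoot q.2} => e.1.1) := by
  have hex : ∀ t, ∃ z, (p t).IsRoot z := fun t =>
    IsAlgClosed.exists_root (p t) (by
      rw [degree_eq_natDegree (hm t).ne_zero, hd]
      exact_mod_cast (by omega : n ≠ 0))
  choose s hs using hex
  have : Nonempty (T → {q : T × ℂ // (p q.1).IsRoot q.2}) := ⟨fun t => ⟨(t, s t), hs t⟩⟩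
  have hopen := aux_open p hm hd hc
  have hcont : Continuous (fun e : {q : T × ℂ // (p q.1).IsRoot q.2} => e.1.1) := by fun_prop
  have main : ∀ t₀, ∃ e : Bundle.Trivialization ((p t₀).roots.toFinset : Set ℂ)
      (fun e : {q : T × ℂ // (p q.1).IsRoot q.2} => e.1.1), t₀ ∈ e.baseSet := by
    intro t₀
    obtain ⟨ε, hε, hsep, hev⟩ := aux_B p hm hd hc hr t₀
    obtain ⟨V, hV, hVo, htV⟩ := eventually_nhds_iff.mp hev
    have hroot : ∀ z : ((p t₀).roots.toFinset : Set ℂ), (p t₀).IsRoot z := fun z =>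
      isRoot_of_mem_roots (Multiset.mem_toFinset.mp z.2)
    have : Nonempty ((p t₀).roots.toFinset : Set ℂ) :=
      ⟨⟨s t₀, by simpa using ⟨(hm t₀).ne_zero, hs t₀⟩⟩⟩
    have : DiscreteTopology ((p t₀).roots.toFinset : Set ℂ) := inferInstance
    let U : ((p t₀).roots.toFinset : Set ℂ) → Set {q : T × ℂ // (p q.1).IsRoot q.2} :=
      fun z => {e | e.1.1 ∈ V ∧ dist e.1.2 z < ε}
    have hUo : ∀ z, IsOpen (U z) := by
      intro z
      apply IsOpen.inter
      · exact hVo.preimage hcont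
      · have h : Continuous fun e : {q : T × ℂ // (p q.1).IsRoot q.2} => dist e.1.2 (z : ℂ) := by
          fun_prop
        exact isOpen_Iio.preimage h
    have surj : ∀ i, (U i).SurjOn (fun e => e.1.1) V := by
      intro z t ht
      obtain ⟨z', h1, h2⟩ := (hV t ht).1 z (hroot z)
      exact ⟨⟨(t, z'), h1⟩, ⟨ht, h2⟩, rfl⟩
    refine ⟨IsOpen.trivializationDiscrete U V hVo ?_ ?_ surj ?_ ?_, htV⟩
    · intro z W hW
      constructor
      · intro h
        exact (h.preimage hcont).inter (hUo z)
      · intro h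
        have := hopen _ h
        convert this using 1
        ext t
        constructor
        · intro ht
          obtain ⟨e, he, rfl⟩ := surj z (hW ht)
          exact ⟨e, ⟨ht, he⟩, rfl⟩
        · rintro ⟨e, ⟨h1, h2⟩, rfl⟩
          exact h1
    · rintro z ⟨⟨t, a⟩, ha⟩ ⟨h1, h2⟩ ⟨⟨t', b⟩, hb⟩ ⟨h3, h4⟩ heq
      simp only at heq h1 h2 h3 h4
      subst heq
      have := (hV t h1).2.2.1 z a b (hroot z) ha hb h2 h4
      subst this
      rfl
    · intro z z' hne
      rw [Function.onFun, Set.disjoint_left]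
      rintro e ⟨h1, h2⟩ ⟨h3, h4⟩
      apply hne
      apply Subtype.ext
      apply hsep _ _ (hroot z) (hroot z')
      rw [dist_comm] at h2
      linarith [dist_triangle (z : ℂ) e.1.2 z']
    · rintro ⟨⟨t, a⟩, ha⟩ ht
      obtain ⟨z, h1, h2⟩ := (hV t ht).2.1 a ha
      rw [Set.mem_iUnion]
      exact ⟨⟨z, by simpa using ⟨(hm t₀).ne_zero, h1⟩⟩, ht, h2⟩
  choose e he using main
  have : ∀ t₀, DiscreteTopology ((p t₀).roots.toFinset : Set ℂ) := fun _ => inferInstance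
  exact IsCoveringMap.mk _ _ e he

lemma aux_mult {n r : ℕ} [PreconnectedSpace T] (p : T → ℂ[X]) (hm : ∀ t, (p t).Monic)
    (hd : ∀ t, (p t).natDegree = n)
    (hc : ∀ k, Continuous fun t => (p t).coeff k)
    (hr : ∀ t, (p t).roots.toFinset.card = r) (a : T → ℂ) (ha : Continuous a)
    (hroot : ∀ t, (p t).IsRoot (a t)) (t t' : T) :
    (p t).rootMultiplicity (a t) = (p t').rootMultiplicity (a t') := by
  have : IsLocallyConstant fun t => (p t).rootMultiplicity (a t) := by
    rw [IsLocallyConstant.iff_eventually_eq]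
    intro t₀
    obtain ⟨ε, hε, hsep, hev⟩ := aux_B p hm hd hc hr t₀
    filter_upwards [hev, (ha.tendsto t₀).eventually (Metric.ball_mem_nhds _ hε)] with t h1 h2
    exact h1.2.2.2 _ _ (hroot t₀) (hroot t) h2
  exact this.apply_eq_of_preconnectedSpace t t'

end Aux

/-- If a monic polynomial `p_t(λ) = λⁿ + c₁(t)λ^{n-1} + ⋯ + cₙ(t)` with continuous coefficients
has exactly `r` distinct roots for every `t` in a real interval `I`, then its distinct roots can
be parameterized by `r` continuous functions whose multiplicities are constant in `t`. -/
theorem roots_constant_multiplicities {n r : ℕ} (hn : 1 ≤ n) (hr : r ≤ n)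
    (I : Set ℝ) (hI : I.OrdConnected) (hne : I.Nonempty)
    (c : Fin n → I → ℂ) (hc : ∀ i, Continuous (c i))
    (p : I → Polynomial ℂ)
    (hp : ∀ t, p t = X ^ n + ∑ i : Fin n, C (c i t) * X ^ (n - ((i : ℕ) + 1)))
    (hroots : ∀ t, (p t).roots.toFinset.card = r) :
    ∃ α : Fin r → I → ℂ, (∀ i, Continuous (α i)) ∧
      (∀ t : I, Function.Injective (fun i => α i t)) ∧
      (∀ t : I, ((p t).roots.toFinset : Set ℂ) = Set.range (fun i => α i t)) ∧
      (∀ i, ∀ t t' : I, (p t).rootMultiplicity (α i t) = (p t').rootMultiplicity (α i t')) := by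
  have hdeg : ∀ t, (∑ i : Fin n, C (c i t) * X ^ (n - ((i : ℕ) + 1)) : ℂ[X]).degree < n := by
    intro t
    rw [← mem_degreeLT]
    refine Submodule.sum_mem _ fun i _ => ?_
    rw [mem_degreeLT]
    refine (degree_C_mul_X_pow_le _ _).trans_lt ?_
    exact_mod_cast (by omega : n - ((i : ℕ) + 1) < n)
  have hm : ∀ t, (p t).Monic := fun t => by
    rw [hp]; exact monic_X_pow_add (hdeg t)
  have hd : ∀ t, (p t).natDegree = n := fun t => by
    rw [hp]
    apply natDegree_eq_of_degree_eq_some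
    rw [degree_add_eq_left_of_degree_lt, degree_X_pow]
    rw [degree_X_pow]; exact hdeg t
  have hcoef : ∀ k, Continuous fun t => (p t).coeff k := by
    intro k
    simp only [hp, coeff_add, finsetSum_coeff, coeff_C_mul]
    fun_prop
  have hconv : Convex ℝ I := hI.convex
  have : ContractibleSpace I := hconv.contractibleSpace hne
  have : LocallyPathConnectedSpace I := hconv.locallyPathConnectedSpace
  have cov := aux_cov hn p hm hd hcoef hroots
  obtain ⟨t₀, ht₀⟩ := hne
  let a₀ : I := ⟨t₀, ht₀⟩
  let z : Fin r ≃ (p a₀).roots.toFinset := ((p a₀).roots.toFinset.equivFinOfCardEq (hroots a₀)).symm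
  have hz : ∀ i, (p a₀).IsRoot (z i) := fun i =>
    isRoot_of_mem_roots (Multiset.mem_toFinset.mp (z i).2)
  choose F hF _ using fun i : Fin r =>
    cov.existsUnique_continuousMap_lifts (ContinuousMap.id I) a₀ ⟨(a₀, z i), hz i⟩ rfl
  have hF1 : ∀ i t, (F i t).1.1 = t := fun i t => congrFun (hF i).2 t
  have hroot : ∀ i t, (p t).IsRoot (F i t).1.2 := by
    intro i t
    have := (F i t).2
    rwa [hF1] at this
  have hcα : ∀ i, Continuous fun t => (F i t).1.2 := by
    intro i
    fun_prop
  have hinj : ∀ t : I, Function.Injective (fun i => (F i t).1.2) := by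
    intro t i j hij
    have h1 : F i t = F j t := by
      apply Subtype.ext
      exact Prod.ext ((hF1 i t).trans (hF1 j t).symm) hij
    have h2 := cov.eq_of_comp_eq (F i).continuous (F j).continuous
      ((hF i).2.trans (hF j).2.symm) t h1
    have h3 := congrFun h2 a₀
    rw [(hF i).1, (hF j).1] at h3
    apply z.injective
    apply Subtype.ext
    exact congrArg (fun e => e.1.2) h3
  refine ⟨fun i t => (F i t).1.2, hcα, hinj, ?_, ?_⟩
  · intro t
    have hsub : Finset.univ.image (fun i => (F i t).1.2) = (p t).roots.toFinset := by
      apply Finset.eq_of_subset_of_card_le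
      · intro y hy
        obtain ⟨i, -, rfl⟩ := Finset.mem_image.mp hy
        exact Multiset.mem_toFinset.mpr ((mem_roots (hm t).ne_zero).mpr (hroot i t))
      · rw [hroots, Finset.card_image_of_injective _ (hinj t)]
        simp
    rw [← hsub]
    simp
  · intro i t t'
    exact aux_mult p hm hd hcoef hroots _ (hcα i) (hroot i) t t'
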